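/- arXiv:1704.08481 — 5 statements merged into one kernel-verified Lean document; each statement's English description precedes it below -/
import Mathlib

section
/- Let F be a face of the standard n-cube, let φ be an outmap such that φ is a PUSO of F, and let R ⊆ {1,…,n}. Define the R-flipped outmap φ' by φ'(V) = φ(V) ∆ R for every subset V of {1,…,n}. Then φ' is a PUSO of F as well. -/
/-!
Since `R` is finite, it suffices to flip a single coordinate `r`. This does not affect the sinks of
a face whose carrier omits `r`. A face whose carrier contains `r` splits along `r` into two facets,
which are proper faces of `F` and so have unique sinks `v₀` and `v₁`, unchanged by the flip. The
sinks of the whole face are those of `v₀`, `v₁` whose outmap value omits `r`, so it has a unique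
sink iff exactly one of `φ v₀`, `φ v₁` contains `r`, and this condition is invariant under the flip.
-/

open Finset
open scoped symmDiff

/-- `V` is a sink of the face `[A,B]` of the standard cube (vertices are subsets
of `{1,…,n}`) under the outmap `φ`: `V` belongs to the face and `φ V` has no
coordinate in the carrier `B \ A`. -/
def IsSink (φ : Finset ℕ → Finset ℕ) (A B V : Finset ℕ) : Prop :=
  A ⊆ V ∧ V ⊆ B ∧ φ V ∩ (B \ A) = ∅

/-- The face `[A,B]` has exactly one sink under `φ`. -/
def HasUniqueSink (φ : Finset ℕ → Finset ℕ) (A B : Finset ℕ) : Prop :=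
  ∃! V, IsSink φ A B V

/-- `φ` is a USO of the face `[A,B]`: every face contained in `[A,B]`
(including `[A,B]` itself) has exactly one sink under `φ`. -/
def IsUSO (φ : Finset ℕ → Finset ℕ) (A B : Finset ℕ) : Prop :=
  A ⊆ B ∧ ∀ A' B' : Finset ℕ, A ⊆ A' → A' ⊆ B' → B' ⊆ B → HasUniqueSink φ A' B'

/-- `φ` is a PUSO of the face `[A,B]`: `[A,B]` does not have exactly one sink
under `φ`, but every proper face contained in `[A,B]` has exactly one sink. -/
def IsPUSO (φ : Finset ℕ → Finset ℕ) (A B : Finset ℕ) : Prop :=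
  A ⊆ B ∧ ¬ HasUniqueSink φ A B ∧
    ∀ A' B' : Finset ℕ, A ⊆ A' → A' ⊆ B' → B' ⊆ B → ¬(A' = A ∧ B' = B) →
      HasUniqueSink φ A' B'

/-- Every proper face of `[A,B]` has exactly one sink under `φ`. This is the part of `IsPUSO` that
passes to all faces contained in `[A,B]`, unlike the failure of uniqueness on `[A,B]` itself. -/
def HasUniqueProperSinks (φ : Finset ℕ → Finset ℕ) (A B : Finset ℕ) : Prop :=
  ∀ A' B' : Finset ℕ, A ⊆ A' → A' ⊆ B' → B' ⊆ B → ¬(A' = A ∧ B' = B) → HasUniqueSink φ A' B'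

lemma existsUnique_eq_or_eq_and_iff_xor {α : Type*} {a b : α} (hab : a ≠ b) (p : α → Prop) :
    (∃! x, (x = a ∨ x = b) ∧ p x) ↔ Xor (p a) (p b) := by
  by_cases ha : p a <;> by_cases hb : p b <;> simp only [ExistsUnique, Xor] <;> grind

variable {φ : Finset ℕ → Finset ℕ} {A B : Finset ℕ} {r : ℕ}

lemma isSink_symmDiff_iff_of_disjoint {R V : Finset ℕ} (hR : Disjoint R (B \ A)) :
    IsSink (fun V => φ V ∆ R) A B V ↔ IsSink φ A B V := by
  have hinter : (φ V ∆ R) ∩ (B \ A) = φ V ∩ (B \ A) := by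
    rw [← inf_eq_inter, inf_symmDiff_distrib_right, hR.eq_bot, symmDiff_bot, inf_eq_inter]
  simp only [IsSink, hinter]

lemma isSink_iff_facets (hr : r ∈ B \ A) {V : Finset ℕ} :
    IsSink φ A B V ↔ (IsSink φ A (B.erase r) V ∨ IsSink φ (insert r A) B V) ∧ r ∉ φ V := by
  have hcarrier : φ V ∩ (B \ A) = ∅ ↔ φ V ∩ (B \ A).erase r = ∅ ∧ r ∉ φ V := by
    nth_rewrite 1 [← insert_erase hr]
    simp only [← disjoint_iff_inter_eq_empty, disjoint_insert_right, and_comm]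
  simp only [IsSink, hcarrier, erase_sdiff_comm, sdiff_insert, subset_erase, insert_subset_iff]
  tauto

lemma IsSink.ne_of_facets {v₀ v₁ : Finset ℕ} (h₀ : IsSink φ A (B.erase r) v₀)
    (h₁ : IsSink φ (insert r A) B v₁) : v₀ ≠ v₁ := by
  rintro rfl
  exact notMem_erase r B (h₀.2.1 (h₁.1 (mem_insert_self r A)))

lemma hasUniqueSink_iff_xor_mem (hr : r ∈ B \ A) {v₀ v₁ : Finset ℕ}
    (h₀ : ∀ V, IsSink φ A (B.erase r) V ↔ V = v₀) (h₁ : ∀ V, IsSink φ (insert r A) B V ↔ V = v₁) :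
    HasUniqueSink φ A B ↔ Xor (r ∈ φ v₀) (r ∈ φ v₁) := by
  have hne : v₀ ≠ v₁ := ((h₀ v₀).2 rfl).ne_of_facets ((h₁ v₁).2 rfl)
  simp only [HasUniqueSink, isSink_iff_facets hr, h₀, h₁]
  rw [existsUnique_eq_or_eq_and_iff_xor hne, xor_not_not]

lemma HasUniqueSink.exists_isSink_iff_eq (h : HasUniqueSink φ A B) :
    ∃ v, ∀ V, IsSink φ A B V ↔ V = v := by
  obtain ⟨v, hv, huniq⟩ := h
  exact ⟨v, fun V => ⟨huniq V, fun hV => hV ▸ hv⟩⟩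

lemma hasUniqueSink_symmDiff_singleton_iff_of_facets (hr : r ∈ B \ A)
    (h₀ : HasUniqueSink φ A (B.erase r)) (h₁ : HasUniqueSink φ (insert r A) B) :
    HasUniqueSink (fun V => φ V ∆ {r}) A B ↔ HasUniqueSink φ A B := by
  obtain ⟨v₀, hv₀⟩ := h₀.exists_isSink_iff_eq
  obtain ⟨v₁, hv₁⟩ := h₁.exists_isSink_iff_eq
  have hflip₀ (V) : IsSink (fun V => φ V ∆ {r}) A (B.erase r) V ↔ V = v₀ :=
    (isSink_symmDiff_iff_of_disjoint (by simp)).trans (hv₀ V)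
  have hflip₁ (V) : IsSink (fun V => φ V ∆ {r}) (insert r A) B V ↔ V = v₁ :=
    (isSink_symmDiff_iff_of_disjoint (by simp)).trans (hv₁ V)
  have hmem (V) : r ∈ φ V ∆ {r} ↔ r ∉ φ V := by simp [mem_symmDiff]
  rw [hasUniqueSink_iff_xor_mem hr hflip₀ hflip₁, hasUniqueSink_iff_xor_mem hr hv₀ hv₁, hmem, hmem,
    xor_not_not]

namespace HasUniqueProperSinks

lemma mono {A' B' : Finset ℕ} (h : HasUniqueProperSinks φ A B) (hA : A ⊆ A') (hB : B' ⊆ B) :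
    HasUniqueProperSinks φ A' B' := by
  intro A'' B'' hA' hAB hB' hne
  refine h A'' B'' (hA.trans hA') hAB (hB'.trans hB) ?_
  rintro ⟨rfl, rfl⟩
  exact hne ⟨hA.antisymm hA', hB'.antisymm hB⟩

lemma hasUniqueSink_erase_right (h : HasUniqueProperSinks φ A B) (hAB : A ⊆ B) (hr : r ∈ B \ A) :
    HasUniqueSink φ A (B.erase r) := by
  obtain ⟨hrB, hrA⟩ := mem_sdiff.1 hr
  exact h A (B.erase r) subset_rfl (subset_erase.2 ⟨hAB, hrA⟩) (erase_subset r B)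
    fun heq => erase_ne_self.2 hrB heq.2

lemma hasUniqueSink_insert_left (h : HasUniqueProperSinks φ A B) (hAB : A ⊆ B) (hr : r ∈ B \ A) :
    HasUniqueSink φ (insert r A) B := by
  obtain ⟨hrB, hrA⟩ := mem_sdiff.1 hr
  exact h (insert r A) B (subset_insert r A) (insert_subset hrB hAB) subset_rfl
    fun heq => insert_ne_self.2 hrA heq.1

lemma hasUniqueSink_symmDiff_singleton_iff (h : HasUniqueProperSinks φ A B) (hAB : A ⊆ B) (r : ℕ) :
    HasUniqueSink (fun V => φ V ∆ {r}) A B ↔ HasUniqueSink φ A B := by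
  by_cases hr : r ∈ B \ A
  · exact hasUniqueSink_symmDiff_singleton_iff_of_facets hr (h.hasUniqueSink_erase_right hAB hr)
      (h.hasUniqueSink_insert_left hAB hr)
  · simp only [HasUniqueSink, isSink_symmDiff_iff_of_disjoint (disjoint_singleton_left.2 hr)]

lemma symmDiff_singleton (h : HasUniqueProperSinks φ A B) (r : ℕ) :
    HasUniqueProperSinks (fun V => φ V ∆ {r}) A B := fun A' B' hA hAB hB hne =>
  ((h.mono hA hB).hasUniqueSink_symmDiff_singleton_iff hAB r).2 (h A' B' hA hAB hB hne)

end HasUniqueProperSinks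

lemma IsPUSO.symmDiff_singleton (h : IsPUSO φ A B) (r : ℕ) :
    IsPUSO (fun V => φ V ∆ {r}) A B := by
  obtain ⟨hAB, hnot, hproper : HasUniqueProperSinks φ A B⟩ := h
  exact ⟨hAB, mt (hproper.hasUniqueSink_symmDiff_singleton_iff hAB r).1 hnot,
    hproper.symmDiff_singleton r⟩

/-- Flipping all coordinates in a set `R` preserves the PUSO property. -/
theorem puso_flip (n : ℕ) (φ : Finset ℕ → Finset ℕ) (A B R : Finset ℕ)
    (hB : B ⊆ Finset.Icc 1 n) (hR : R ⊆ Finset.Icc 1 n)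
    (hφ : IsPUSO φ A B) :
    IsPUSO (fun V => φ V ∆ R) A B := by
  clear hR
  induction R using Finset.induction_on with
  | empty => simpa only [← Finset.bot_eq_empty, symmDiff_bot] using hφ
  | insert r S hr ih =>
    have hinsert : insert r S = S ∆ {r} := by
      rw [(disjoint_singleton_right.2 hr).symmDiff_eq_sup, sup_eq_union, union_singleton]
    simpa only [hinsert, symmDiff_assoc] using ih.symmDiff_singleton r
end

section
/- Let F = [A,B] be a face of the standard n-cube of dimension at least 2, and let φ be an outmap. Then φ is a PUSO of F if and only if both of the following hold: (i) (φ(U) ∆ φ(V)) ∩ (U ∆ V) ≠ ∅ for all pairs of distinct vertices U, V ∈ [A,B] that are not antipodal in [A,B], and (ii) (φ(U) ∆ φ(V)) ∩ (U ∆ V) = ∅ for all pairs of vertices U, V ∈ [A,B] that are antipodal in [A,B]. -/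
/-!
Reversing all edges in one direction `i` preserves being a PUSO. Indeed, a vertex is a sink of one
of the two facets of `[A,B]` in direction `i` iff it is a sink of `[A,B]` before or after the
reversal. So if each of these facets has a single sink, the numbers of sinks of `[A,B]` before and
after the reversal add up to `2`, and one of them is `1` iff the other is.

Given a PUSO and a vertex `U`, reverse the directions in `φ U`, which makes `U` a sink of every face
containing it. If (i) failed for `U` and `V`, then `V` would be a second sink of the proper face
`[U ∩ V, U ∪ V]`. As the sink `U` of `[A,B]` is not the only one, there is another one, which (i)
forces to be the antipode of `U`; this is (ii).

Conversely, (i) makes `V ↦ φ V ∩ C` injective on each proper face of carrier `C`, hence by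
counting a bijection onto the subsets of `C`, so exactly one vertex is sent to `∅`; and (ii) makes
the antipode of any sink of `[A,B]` another sink.
-/

open Finset
open scoped symmDiff

section GeneralizedBooleanAlgebra

variable {α : Type*} [GeneralizedBooleanAlgebra α] {a b a' b' c u v : α}

lemma symmDiff_inf_eq_bot_iff : a ∆ b ⊓ c = ⊥ ↔ a ⊓ c = b ⊓ c := by
  rw [inf_symmDiff_distrib_right, symmDiff_eq_bot]

lemma symmDiff_le_sdiff_of_mem_Icc (hu : u ∈ Set.Icc a b) (hv : v ∈ Set.Icc a b) :
    u ∆ v ≤ b \ a := by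
  rw [symmDiff_eq_sup_sdiff_inf]
  exact sdiff_le_sdiff (sup_le hu.2 hv.2) (le_inf hu.1 hv.1)

lemma symmDiff_sdiff_mem_Icc (hv : v ∈ Set.Icc a b) : v ∆ (b \ a) ∈ Set.Icc a b :=
  ⟨(le_sdiff.2 ⟨hv.1, disjoint_sdiff_self_right⟩).trans le_sup_left,
    symmDiff_le_sup.trans (sup_le hv.2 sdiff_le)⟩

lemma sdiff_eq_sdiff_iff_of_le (ha : a ≤ a') (hab : a' ≤ b') (hb : b' ≤ b) :
    b' \ a' = b \ a ↔ a' = a ∧ b' = b := by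
  refine ⟨fun h => ⟨le_antisymm ?_ ha, le_antisymm hb ?_⟩, fun ⟨h₁, h₂⟩ => by rw [h₁, h₂]⟩
  · have hle : a' \ a ≤ b' \ a' := (sdiff_le_sdiff_right (hab.trans hb)).trans_eq h.symm
    exact sdiff_eq_bot_iff.1 ((disjoint_sdiff_self_right.mono_left sdiff_le).eq_bot_of_le hle)
  · calc b ≤ a ⊔ b \ a := le_sup_sdiff
      _ = a ⊔ b' \ a' := by rw [h]
      _ ≤ b' := sup_le (ha.trans hab) sdiff_le

lemma symmDiff_eq_sdiff_iff_of_mem_Icc (hu : u ∈ Set.Icc a b) (hv : v ∈ Set.Icc a b) :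
    u ∆ v = b \ a ↔ u ⊓ v = a ∧ u ⊔ v = b := by
  rw [symmDiff_eq_sup_sdiff_inf]
  exact sdiff_eq_sdiff_iff_of_le (le_inf hu.1 hv.1) inf_le_sup (sup_le hu.2 hv.2)

lemma symmDiff_ne_sdiff_of_mem_Icc (ha : a ≤ a') (hb : b' ≤ b) (hproper : ¬(a' = a ∧ b' = b))
    (hu : u ∈ Set.Icc a' b') (hv : v ∈ Set.Icc a' b') : u ∆ v ≠ b \ a := by
  intro hanti
  obtain ⟨hinf, hsup⟩ := (symmDiff_eq_sdiff_iff_of_mem_Icc (Set.Icc_subset_Icc ha hb hu)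
    (Set.Icc_subset_Icc ha hb hv)).1 hanti
  exact hproper ⟨((le_inf hu.1 hv.1).trans_eq hinf).antisymm ha,
    hb.antisymm (hsup.ge.trans (sup_le hu.2 hv.2))⟩

end GeneralizedBooleanAlgebra

/-- The outmap obtained from `φ` by reversing all edges whose direction lies in `R`. -/
def reverseEdges (φ : Finset ℕ → Finset ℕ) (R : Finset ℕ) : Finset ℕ → Finset ℕ :=
  fun V => φ V ∆ R

/-- The set of sinks of the face `[A,B]` under `φ`, as a finite set so that sinks can be counted. -/
def sinks (φ : Finset ℕ → Finset ℕ) (A B : Finset ℕ) : Finset (Finset ℕ) :=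
  {V ∈ Icc A B | φ V ∩ (B \ A) = ∅}

/-- The vertices of the face `[A,B]` that are sinks up to direction `i`: no edge of the face
leaves them under `φ`, except possibly the one in direction `i`. -/
def almostSinks (φ : Finset ℕ → Finset ℕ) (A B : Finset ℕ) (i : ℕ) : Finset (Finset ℕ) :=
  {V ∈ Icc A B | φ V ∩ (B \ A).erase i = ∅}

section

variable {φ : Finset ℕ → Finset ℕ} {A B A' B' U V R : Finset ℕ} {i : ℕ}

lemma mem_sinks : V ∈ sinks φ A B ↔ IsSink φ A B V := by
  simp only [sinks, IsSink, mem_filter, mem_Icc, and_assoc]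

lemma hasUniqueSink_iff_card_sinks : HasUniqueSink φ A B ↔ #(sinks φ A B) = 1 := by
  simp only [HasUniqueSink, ← mem_sinks, card_eq_one_iff_existsUnique]

lemma reverseEdges_empty : reverseEdges φ ∅ = φ :=
  funext fun V => symmDiff_bot (φ V)

lemma reverseEdges_insert (hi : i ∉ R) :
    reverseEdges φ (insert i R) = reverseEdges (reverseEdges φ R) {i} := by
  funext V
  have hR : insert i R = R ∆ {i} := by
    rw [(disjoint_singleton_right.2 hi).symmDiff_eq_sup, sup_eq_union, union_comm, insert_eq]
  simp only [reverseEdges, hR, symmDiff_assoc]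

lemma reverseEdges_inter_of_disjoint {C : Finset ℕ} (h : Disjoint R C) :
    reverseEdges φ R V ∩ C = φ V ∩ C := by
  have hcancel := inf_symmDiff_distrib_right (φ V) R C
  rwa [h.eq_bot, symmDiff_bot] at hcancel

lemma hasUniqueSink_reverseEdges_iff_of_disjoint (h : Disjoint R (B \ A)) :
    HasUniqueSink (reverseEdges φ R) A B ↔ HasUniqueSink φ A B := by
  simp only [HasUniqueSink, IsSink, reverseEdges_inter_of_disjoint h]

lemma sinks_erase : sinks φ A (B.erase i) = {V ∈ almostSinks φ A B i | i ∉ V} := by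
  ext V
  simp only [sinks, almostSinks, mem_filter, mem_Icc, subset_erase, erase_sdiff_comm]
  tauto

lemma sinks_insert : sinks φ (insert i A) B = {V ∈ almostSinks φ A B i | i ∈ V} := by
  ext V
  simp only [sinks, almostSinks, mem_filter, mem_Icc, insert_subset_iff, sdiff_insert]
  tauto

lemma sinks_eq_filter_almostSinks (hi : i ∈ B \ A) :
    sinks φ A B = {V ∈ almostSinks φ A B i | i ∉ φ V} := by
  ext V
  have hout : φ V ∩ (B \ A) = ∅ ↔ φ V ∩ (B \ A).erase i = ∅ ∧ i ∉ φ V := by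
    conv_lhs => rw [← insert_erase hi]
    simp only [← disjoint_iff_inter_eq_empty, disjoint_insert_right, and_comm]
  simp only [sinks, almostSinks, mem_filter, hout, and_assoc]

lemma sinks_reverseEdges_singleton (hi : i ∈ B \ A) :
    sinks (reverseEdges φ {i}) A B = {V ∈ almostSinks φ A B i | i ∈ φ V} := by
  have hdisj : Disjoint {i} ((B \ A).erase i) := disjoint_singleton_left.2 (notMem_erase _ _)
  have hmem (V : Finset ℕ) : i ∉ reverseEdges φ {i} V ↔ i ∈ φ V := by
    simp [reverseEdges, mem_symmDiff]
  simp only [sinks_eq_filter_almostSinks hi, almostSinks, reverseEdges_inter_of_disjoint hdisj,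
    hmem]

lemma card_sinks_add_card_sinks_reverseEdges (hi : i ∈ B \ A) :
    #(sinks φ A B) + #(sinks (reverseEdges φ {i}) A B) =
      #(sinks φ A (B.erase i)) + #(sinks φ (insert i A) B) :=
  calc #(sinks φ A B) + #(sinks (reverseEdges φ {i}) A B)
    _ = #(almostSinks φ A B i) := by
      rw [sinks_eq_filter_almostSinks hi, sinks_reverseEdges_singleton hi, add_comm,
        card_filter_add_card_filter_not]
    _ = #(sinks φ A (B.erase i)) + #(sinks φ (insert i A) B) := by
      rw [sinks_erase, sinks_insert, add_comm, card_filter_add_card_filter_not]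

lemma hasUniqueSink_reverseEdges_iff_of_facets (hi : i ∈ B \ A)
    (hlower : HasUniqueSink φ A (B.erase i)) (hupper : HasUniqueSink φ (insert i A) B) :
    HasUniqueSink (reverseEdges φ {i}) A B ↔ HasUniqueSink φ A B := by
  rw [hasUniqueSink_iff_card_sinks] at hlower hupper
  have hcard := card_sinks_add_card_sinks_reverseEdges (φ := φ) hi
  rw [hasUniqueSink_iff_card_sinks, hasUniqueSink_iff_card_sinks]
  omega

lemma inter_symmDiff_eq_empty_of_inter_carrier (hU : U ∈ Set.Icc A B) (hV : V ∈ Set.Icc A B)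
    (h : (φ U ∆ φ V) ∩ (B \ A) = ∅) : (φ U ∆ φ V) ∩ (U ∆ V) = ∅ :=
  subset_empty.1 <| (inter_subset_inter_left (symmDiff_le_sdiff_of_mem_Icc hU hV)).trans_eq h

lemma isSink_reverseEdges_self (hU : U ∈ Set.Icc A B) :
    IsSink (reverseEdges φ (φ U)) A B U :=
  ⟨hU.1, hU.2, by simp [reverseEdges]⟩

lemma not_hasUniqueSink_reverseEdges_inter_union (hne : U ≠ V) (h : (φ U ∆ φ V) ∩ (U ∆ V) = ∅) :
    ¬ HasUniqueSink (reverseEdges φ (φ U)) (U ∩ V) (U ∪ V) := by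
  have hcarrier : (U ∪ V) \ (U ∩ V) = U ∆ V := (symmDiff_eq_sup_sdiff_inf U V).symm
  have hV : IsSink (reverseEdges φ (φ U)) (U ∩ V) (U ∪ V) V :=
    ⟨inter_subset_right, subset_union_right, by rwa [hcarrier, reverseEdges, symmDiff_comm]⟩
  exact fun hunique => hne
    (hunique.unique (isSink_reverseEdges_self ⟨inter_subset_left, subset_union_left⟩) hV)

namespace IsPUSO

lemma hasUniqueSink_reverseEdges_singleton_iff (h : IsPUSO φ A B) (hA : A ⊆ A') (hAB : A' ⊆ B')
    (hB : B' ⊆ B) : HasUniqueSink (reverseEdges φ {i}) A' B' ↔ HasUniqueSink φ A' B' := by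
  by_cases hi : i ∈ B' \ A'
  · exact hasUniqueSink_reverseEdges_iff_of_facets hi
      (h.2.2 A' (B'.erase i) hA (by grind) (by grind) (by grind))
      (h.2.2 (insert i A') B' (by grind) (by grind) hB (by grind))
  · exact hasUniqueSink_reverseEdges_iff_of_disjoint (disjoint_singleton_left.2 hi)

lemma reverseEdges_singleton (h : IsPUSO φ A B) (i : ℕ) : IsPUSO (reverseEdges φ {i}) A B :=
  ⟨h.1, (h.hasUniqueSink_reverseEdges_singleton_iff subset_rfl h.1 subset_rfl).not.2 h.2.1,
    fun A' B' hA hAB hB hproper =>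
      (h.hasUniqueSink_reverseEdges_singleton_iff hA hAB hB).2 (h.2.2 A' B' hA hAB hB hproper)⟩

protected lemma reverseEdges (h : IsPUSO φ A B) (R : Finset ℕ) :
    IsPUSO (reverseEdges φ R) A B := by
  induction R using Finset.induction_on with
  | empty => rwa [reverseEdges_empty]
  | insert i R hi ih =>
    rw [reverseEdges_insert hi]
    exact ih.reverseEdges_singleton i

lemma inter_symmDiff_ne_empty (h : IsPUSO φ A B) (hU : U ∈ Set.Icc A B) (hV : V ∈ Set.Icc A B)
    (hne : U ≠ V) (hanti : U ∆ V ≠ B \ A) : (φ U ∆ φ V) ∩ (U ∆ V) ≠ ∅ := fun hempty =>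
  not_hasUniqueSink_reverseEdges_inter_union hne hempty <|
    (h.reverseEdges (φ U)).2.2 _ _ (le_inf hU.1 hV.1) inf_le_sup (sup_le hU.2 hV.2)
      (hanti ∘ (symmDiff_eq_sdiff_iff_of_mem_Icc hU hV).2)

lemma exists_antipodal_inter_eq_empty (h : IsPUSO φ A B) (hU : U ∈ Set.Icc A B) :
    ∃ W, U ∆ W = B \ A ∧ (φ U ∆ φ W) ∩ (B \ A) = ∅ := by
  obtain ⟨W, hW, hWU⟩ : ∃ W, IsSink (reverseEdges φ (φ U)) A B W ∧ W ≠ U := by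
    by_contra! honly
    exact (h.reverseEdges (φ U)).2.1 ⟨U, isSink_reverseEdges_self hU, honly⟩
  have hempty : (φ U ∆ φ W) ∩ (B \ A) = ∅ := symmDiff_comm (φ W) (φ U) ▸ hW.2.2
  have hWIcc : W ∈ Set.Icc A B := ⟨hW.1, hW.2.1⟩
  refine ⟨W, ?_, hempty⟩
  by_contra hanti
  exact h.inter_symmDiff_ne_empty hU hWIcc hWU.symm hanti
    (inter_symmDiff_eq_empty_of_inter_carrier hU hWIcc hempty)

lemma inter_symmDiff_eq_empty (h : IsPUSO φ A B) (hU : U ∈ Set.Icc A B)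
    (hanti : U ∆ V = B \ A) : (φ U ∆ φ V) ∩ (U ∆ V) = ∅ := by
  obtain ⟨W, hW, hempty⟩ := h.exists_antipodal_inter_eq_empty hU
  obtain rfl : V = W := symmDiff_right_injective U (hanti.trans hW.symm)
  rwa [hanti]

end IsPUSO

lemma injOn_inter_carrier
    (h : ∀ U ∈ Set.Icc A B, ∀ V ∈ Set.Icc A B, U ≠ V → (φ U ∆ φ V) ∩ (U ∆ V) ≠ ∅) :
    Set.InjOn (fun V => φ V ∩ (B \ A)) (Set.Icc A B) := by
  intro U hU V hV heq
  by_contra hne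
  have hempty : (φ U ∆ φ V) ∩ (B \ A) = ∅ := symmDiff_inf_eq_bot_iff.2 heq
  exact h U hU V hV hne (inter_symmDiff_eq_empty_of_inter_carrier hU hV hempty)

lemma hasUniqueSink_of_injOn (hAB : A ⊆ B)
    (hinj : Set.InjOn (fun V => φ V ∩ (B \ A)) (Set.Icc A B)) : HasUniqueSink φ A B := by
  have hmaps : Set.MapsTo (fun V => φ V ∩ (B \ A)) (Icc A B : Finset (Finset ℕ))
      ((B \ A).powerset : Finset (Finset ℕ)) :=
    fun V _ => mem_powerset.2 inter_subset_right
  have hcard : #(B \ A).powerset ≤ #(Icc A B) := by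
    rw [card_powerset, card_Icc_finset hAB, card_sdiff_of_subset hAB]
  rw [← coe_Icc] at hinj
  obtain ⟨V, hV, hsink⟩ :=
    surjOn_of_injOn_of_card_le _ hmaps hinj hcard (empty_mem_powerset (B \ A))
  have hVIcc := mem_Icc.1 hV
  exact ⟨V, ⟨hVIcc.1, hVIcc.2, hsink⟩, fun W ⟨hAW, hWB, hW⟩ =>
    hinj (mem_Icc.2 ⟨hAW, hWB⟩) hV (hW.trans hsink.symm)⟩

lemma not_hasUniqueSink_of_antipodal (hC : (B \ A).Nonempty)
    (h : ∀ U ∈ Set.Icc A B, ∀ V ∈ Set.Icc A B, U ∆ V = B \ A → (φ U ∆ φ V) ∩ (U ∆ V) = ∅) :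
    ¬ HasUniqueSink φ A B := by
  rintro ⟨V, ⟨hAV, hVB, hsink⟩, hunique⟩
  have hV : V ∈ Set.Icc A B := ⟨hAV, hVB⟩
  have hW : V ∆ (B \ A) ∈ Set.Icc A B := symmDiff_sdiff_mem_Icc hV
  have hanti : V ∆ (V ∆ (B \ A)) = B \ A := symmDiff_symmDiff_cancel_left V (B \ A)
  have hempty := h V hV _ hW hanti
  rw [hanti] at hempty
  have hsinkW : φ (V ∆ (B \ A)) ∩ (B \ A) = ∅ :=
    (symmDiff_inf_eq_bot_iff.1 hempty).symm.trans hsink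
  exact hC.ne_empty (symmDiff_eq_left.1 (hunique _ ⟨hW.1, hW.2, hsinkW⟩))

end

/-- PUSO characterization: `φ` is a PUSO of a face `[A,B]` of dimension at
least 2 iff the pair evaluation succeeds on every pair of distinct
non-antipodal vertices and fails on every pair of antipodal vertices. -/
theorem puso_characterization (n : ℕ) (φ : Finset ℕ → Finset ℕ) (A B : Finset ℕ)
    (hAB : A ⊆ B) (hB : B ⊆ Finset.Icc 1 n) (hdim : 2 ≤ (B \ A).card) :
    IsPUSO φ A B ↔
      ((∀ U V : Finset ℕ, A ⊆ U → U ⊆ B → A ⊆ V → V ⊆ B → U ≠ V →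
          U ∆ V ≠ B \ A → (φ U ∆ φ V) ∩ (U ∆ V) ≠ ∅) ∧
        (∀ U V : Finset ℕ, A ⊆ U → U ⊆ B → A ⊆ V → V ⊆ B →
          U ∆ V = B \ A → (φ U ∆ φ V) ∩ (U ∆ V) = ∅)) := by
  constructor
  · exact fun h => ⟨fun U V hAU hUB hAV hVB => h.inter_symmDiff_ne_empty ⟨hAU, hUB⟩ ⟨hAV, hVB⟩,
      fun U V hAU hUB _ _ => h.inter_symmDiff_eq_empty ⟨hAU, hUB⟩⟩
  · rintro ⟨hpair, hanti⟩
    have hC : (B \ A).Nonempty := card_pos.1 (by omega)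
    refine ⟨hAB, not_hasUniqueSink_of_antipodal hC fun U hU V hV =>
      hanti U V hU.1 hU.2 hV.1 hV.2, fun A' B' hA hAB' hB' hproper => ?_⟩
    refine hasUniqueSink_of_injOn hAB' (injOn_inter_carrier fun U hU V hV hne => ?_)
    exact hpair U V (hA.trans hU.1) (hU.2.trans hB') (hA.trans hV.1) (hV.2.trans hB') hne
      (symmDiff_ne_sdiff_of_mem_Icc hA hB' hproper hU hV)
end

section
/- Let φ be an outmap on the standard n-cube (n ≥ 2) that is a PUSO of the full face [∅,{1,…,n}]. Then for every pair of antipodal vertices U and V = {1,…,n} \ U, the outmap values within the cube coincide: φ(U) ∩ {1,…,n} = φ(V) ∩ {1,…,n}. -/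
/-!
Replace `φ` by `V ↦ φ V ∆ {i}`, that is, reverse all edges in direction `i`. A face whose carrier
contains `i` splits into two opposite `i`-facets; if these have unique sinks `W₀` and `W₁`, then the
face has a unique sink iff exactly one of `φ W₀` and `φ W₁` contains `i`, a condition that the
reversal preserves. Hence the reversal preserves PUSOs, and so does `V ↦ φ V ∆ R` for every `R`.

Take `R = φ U`. Now `U` is a sink of the whole face, and therefore not the only one. Two distinct
sinks of the face are also sinks of the smallest face containing them, which then is not proper; so
the other sink is the antipode of `U`, and its being a sink says that its outmap value agrees with
that of `U` on the carrier.
-/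

open Finset
open scoped symmDiff

section Sinks

variable {φ : Finset ℕ → Finset ℕ} {A B V : Finset ℕ} {i : ℕ}

theorem IsSink.of_subface {A' B' : Finset ℕ} (h : IsSink φ A B V) (hA : A ⊆ A') (hAV : A' ⊆ V)
    (hVB : V ⊆ B') (hB : B' ⊆ B) : IsSink φ A' B' V :=
  ⟨hAV, hVB, subset_empty.1 <|
    (inter_subset_inter_left (sdiff_subset_sdiff hB hA)).trans h.2.2.subset⟩

theorem isSink_symmDiff_iff {R : Finset ℕ} :
    IsSink (fun W => φ W ∆ R) A B V ↔
      A ⊆ V ∧ V ⊆ B ∧ φ V ∩ (B \ A) = R ∩ (B \ A) := by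
  have inter_eq_empty_iff : (φ V ∆ R) ∩ (B \ A) = ∅ ↔ φ V ∩ (B \ A) = R ∩ (B \ A) := by
    rw [← inf_eq_inter, inf_symmDiff_distrib_right, ← bot_eq_empty, symmDiff_eq_bot]
    rfl
  exact and_congr_right' (and_congr_right' inter_eq_empty_iff)

theorem isSink_symmDiff_singleton_iff_of_notMem (hi : i ∉ B \ A) :
    IsSink (fun W => φ W ∆ {i}) A B V ↔ IsSink φ A B V := by
  rw [isSink_symmDiff_iff, singleton_inter_of_notMem hi, IsSink]

theorem isSink_iff_isSink_facet_and_notMem (hi : i ∈ B \ A) :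
    IsSink φ A B V ↔
      (IsSink φ A (B.erase i) V ∨ IsSink φ (insert i A) B V) ∧ i ∉ φ V := by
  constructor
  · intro h
    refine ⟨?_, fun hiV => notMem_empty i (h.2.2 ▸ mem_inter.2 ⟨hiV, hi⟩)⟩
    by_cases hiV : i ∈ V
    · exact .inr (h.of_subface (subset_insert i A) (insert_subset hiV h.1) h.2.1 subset_rfl)
    · exact .inl (h.of_subface subset_rfl h.1 (subset_erase.2 ⟨h.2.1, hiV⟩) (erase_subset i B))
  · rintro ⟨⟨hAV, hVB, hV⟩ | ⟨hAV, hVB, hV⟩, hiV⟩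
    · rw [erase_sdiff_comm, inter_erase, erase_eq_of_notMem (by simp [hiV])] at hV
      exact ⟨hAV, hVB.trans (erase_subset i B), hV⟩
    · rw [sdiff_insert, inter_erase, erase_eq_of_notMem (by simp [hiV])] at hV
      exact ⟨(subset_insert i A).trans hAV, hVB, hV⟩

theorem hasUniqueSink_symmDiff_singleton_iff_of_notMem (hi : i ∉ B \ A) :
    HasUniqueSink (fun W => φ W ∆ {i}) A B ↔ HasUniqueSink φ A B :=
  existsUnique_congr fun _ => isSink_symmDiff_singleton_iff_of_notMem hi

theorem hasUniqueSink_iff_xor {W₀ W₁ : Finset ℕ} (hi : i ∈ B \ A)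
    (h₀ : HasUniqueSink φ A (B.erase i)) (hW₀ : IsSink φ A (B.erase i) W₀)
    (h₁ : HasUniqueSink φ (insert i A) B) (hW₁ : IsSink φ (insert i A) B W₁) :
    HasUniqueSink φ A B ↔ Xor (i ∈ φ W₀) (i ∈ φ W₁) := by
  have isSink_iff (V : Finset ℕ) : IsSink φ A B V ↔ (V = W₀ ∨ V = W₁) ∧ i ∉ φ V := by
    have lower_iff : IsSink φ A (B.erase i) V ↔ V = W₀ :=
      ⟨fun hV => h₀.unique hV hW₀, fun hV => hV ▸ hW₀⟩
    have upper_iff : IsSink φ (insert i A) B V ↔ V = W₁ :=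
      ⟨fun hV => h₁.unique hV hW₁, fun hV => hV ▸ hW₁⟩
    rw [isSink_iff_isSink_facet_and_notMem hi, lower_iff, upper_iff]
  have hi₀ : i ∉ W₀ := fun h => notMem_erase i B (hW₀.2.1 h)
  have hi₁ : i ∈ W₁ := hW₁.1 (mem_insert_self i A)
  have hne : W₀ ≠ W₁ := (ne_of_mem_of_not_mem' hi₁ hi₀).symm
  rw [HasUniqueSink, existsUnique_congr isSink_iff, ExistsUnique]
  grind

theorem hasUniqueSink_symmDiff_singleton_iff_of_mem (hi : i ∈ B \ A)
    (h₀ : HasUniqueSink φ A (B.erase i)) (h₁ : HasUniqueSink φ (insert i A) B) :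
    HasUniqueSink (fun W => φ W ∆ {i}) A B ↔ HasUniqueSink φ A B := by
  obtain ⟨W₀, hW₀⟩ := h₀.exists
  obtain ⟨W₁, hW₁⟩ := h₁.exists
  have lower : i ∉ B.erase i \ A := by simp
  have upper : i ∉ B \ insert i A := by simp
  have mem_flip_iff (W : Finset ℕ) : i ∈ φ W ∆ {i} ↔ i ∉ φ W := by simp [mem_symmDiff]
  rw [hasUniqueSink_iff_xor hi h₀ hW₀ h₁ hW₁,
    hasUniqueSink_iff_xor hi
      ((hasUniqueSink_symmDiff_singleton_iff_of_notMem lower).2 h₀)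
      ((isSink_symmDiff_singleton_iff_of_notMem lower).2 hW₀)
      ((hasUniqueSink_symmDiff_singleton_iff_of_notMem upper).2 h₁)
      ((isSink_symmDiff_singleton_iff_of_notMem upper).2 hW₁),
    mem_flip_iff, mem_flip_iff, xor_not_not]

end Sinks

namespace IsPUSO

variable {φ : Finset ℕ → Finset ℕ} {A B U V : Finset ℕ}

theorem hasUniqueSink_symmDiff_singleton_iff {A' B' : Finset ℕ} (hφ : IsPUSO φ A B)
    (hA : A ⊆ A') (hAB : A' ⊆ B') (hB : B' ⊆ B) (i : ℕ) :
    HasUniqueSink (fun W => φ W ∆ {i}) A' B' ↔ HasUniqueSink φ A' B' := by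
  by_cases hi : i ∈ B' \ A'
  · obtain ⟨hiB, hiA⟩ := mem_sdiff.1 hi
    -- The facets are proper faces of `[A, B]` even when `[A', B']` is not.
    have h₀ : HasUniqueSink φ A' (B'.erase i) := by
      refine hφ.2.2 _ _ hA (subset_erase.2 ⟨hAB, hiA⟩) ((erase_subset i B').trans hB) ?_
      rintro ⟨-, rfl⟩
      exact notMem_erase i B' (hB hiB)
    have h₁ : HasUniqueSink φ (insert i A') B' := by
      refine hφ.2.2 _ _ (hA.trans (subset_insert i A')) (insert_subset hiB hAB) hB ?_
      rintro ⟨rfl, -⟩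
      exact hiA (hA (mem_insert_self i A'))
    exact hasUniqueSink_symmDiff_singleton_iff_of_mem hi h₀ h₁
  · exact hasUniqueSink_symmDiff_singleton_iff_of_notMem hi

theorem symmDiff_singleton_s2 (hφ : IsPUSO φ A B) (i : ℕ) : IsPUSO (fun W => φ W ∆ {i}) A B := by
  refine ⟨hφ.1, ?_, fun A' B' hA hAB hB hne => ?_⟩
  · rw [hφ.hasUniqueSink_symmDiff_singleton_iff subset_rfl hφ.1 subset_rfl]
    exact hφ.2.1
  · rw [hφ.hasUniqueSink_symmDiff_singleton_iff hA hAB hB]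
    exact hφ.2.2 A' B' hA hAB hB hne

theorem symmDiff_right (hφ : IsPUSO φ A B) (R : Finset ℕ) : IsPUSO (fun W => φ W ∆ R) A B := by
  induction R using Finset.induction_on with
  | empty => simpa only [← bot_eq_empty, symmDiff_bot] using hφ
  | insert i S hi ih =>
    have insert_eq_symmDiff : insert i S = S ∆ {i} := by
      rw [(disjoint_singleton_right.2 hi).symmDiff_eq_sup, sup_eq_union, union_comm, insert_eq]
    simpa only [insert_eq_symmDiff, symmDiff_assoc] using ih.symmDiff_singleton_s2 i

theorem exists_isSink_ne (hφ : IsPUSO φ A B) (hU : IsSink φ A B U) :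
    ∃ V, IsSink φ A B V ∧ V ≠ U := by
  by_contra! h
  exact hφ.2.1 ⟨U, hU, h⟩

theorem symmDiff_eq_sdiff_of_isSink (hφ : IsPUSO φ A B) (hU : IsSink φ A B U)
    (hV : IsSink φ A B V) (hne : U ≠ V) : U ∆ V = B \ A := by
  have hA : A ⊆ U ∩ V := subset_inter hU.1 hV.1
  have hB : U ∪ V ⊆ B := union_subset hU.2.1 hV.2.1
  have hspan : U ∩ V = A ∧ U ∪ V = B := by
    by_contra hproper
    have huniq := hφ.2.2 _ _ hA inter_subset_union hB hproper
    exact hne <| huniq.unique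
      (hU.of_subface hA inter_subset_left subset_union_left hB)
      (hV.of_subface hA inter_subset_right subset_union_right hB)
  rw [symmDiff_eq_sup_sdiff_inf, sup_eq_union, inf_eq_inter, hspan.1, hspan.2]

end IsPUSO

theorem puso_antipodal_outmaps_equal_general {φ : Finset ℕ → Finset ℕ} {A B U V : Finset ℕ}
    (hφ : IsPUSO φ A B) (hAU : A ⊆ U) (hUB : U ⊆ B) (hUV : U ∆ V = B \ A) :
    φ U ∩ (B \ A) = φ V ∩ (B \ A) := by
  have hψ : IsPUSO (fun W => φ W ∆ φ U) A B := hφ.symmDiff_right (φ U)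
  have hU : IsSink (fun W => φ W ∆ φ U) A B U := isSink_symmDiff_iff.2 ⟨hAU, hUB, rfl⟩
  obtain ⟨W, hW, hWU⟩ := hψ.exists_isSink_ne hU
  obtain rfl : W = V :=
    symmDiff_right_injective U ((hψ.symmDiff_eq_sdiff_of_isSink hU hW hWU.symm).trans hUV.symm)
  exact (isSink_symmDiff_iff.1 hW).2.2.symm

/-- In a PUSO of the full face of the standard `n`-cube (`n ≥ 2`), antipodal
vertices have the same outmap value within the cube. -/
theorem puso_antipodal_outmaps_equal (n : ℕ) (hn : 2 ≤ n)
    (φ : Finset ℕ → Finset ℕ) (hφ : IsPUSO φ ∅ (Finset.Icc 1 n)) :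
    ∀ U : Finset ℕ, U ⊆ Finset.Icc 1 n →
      φ U ∩ Finset.Icc 1 n = φ (Finset.Icc 1 n \ U) ∩ Finset.Icc 1 n := by
  intro U hU
  have antipodal : U ∆ (Icc 1 n \ U) = Icc 1 n \ ∅ := by
    rw [disjoint_sdiff.symmDiff_eq_sup, sup_eq_union, union_sdiff_of_subset hU, sdiff_empty]
  simpa only [sdiff_empty] using
    puso_antipodal_outmaps_equal_general hφ (empty_subset U) hU antipodal
end

section
/- Let φ be an outmap on the standard n-cube (n ≥ 2) that is a PUSO of the full face [∅,{1,…,n}]. Then the outmap values of all vertices have the same parity: for all vertices U, V ⊆ {1,…,n}, the cardinality |(φ(U) ∩ {1,…,n}) ∆ (φ(V) ∩ {1,…,n})| is even. -/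
open Finset
open scoped symmDiff

/-!
Let `C = B \ A` be the carrier of a face `[A,B]`, and for `S ⊆ C` let `f S` be the number of its
vertices `V` with `φ V ∩ C = S`. The faces with carrier `C \ S` partition `[A,B]` into `2 ^ |S|`
classes. In a PUSO each of them has exactly one sink when `S` is nonempty, and the sinks are the
vertices with `φ V ∩ C ⊆ S`; hence `∑ T ⊆ S, f T = 2 ^ |S|` for nonempty `S`. So `f - 1` has zero
sum over the subsets of each nonempty `S`, which forces `f S - 1 = (-1) ^ |S| * (f ∅ - 1)`. Since
`f ∅` counts the sinks of `[A,B]`, it is not `1`. If `f ∅ ≥ 2` then `f` vanishes on odd sets, and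
if `f ∅ = 0` then it vanishes on even sets.
-/

lemma even_card_symmDiff_iff {α : Type*} [DecidableEq α] {s t : Finset α} :
    Even #(s ∆ t) ↔ (Even #s ↔ Even #t) := by
  have hcard : #(s ∆ t) = #(s \ t) + #(t \ s) := card_union_of_disjoint disjoint_sdiff_sdiff
  rw [hcard, ← card_sdiff_add_card_inter s t, ← card_sdiff_add_card_inter t s, inter_comm t s]
  simp only [Nat.even_add]
  tauto

lemma eq_neg_one_pow_card_zsmul_of_sum_powerset_eq_zero {α G : Type*}
    [AddCommGroup G] {f : Finset α → G} {S : Finset α}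
    (hf : ∀ T ⊆ S, T.Nonempty → ∑ R ∈ T.powerset, f R = 0) :
    f S = (-1 : ℤ) ^ #S • f ∅ := by
  classical
  induction S using Finset.strongInduction with
  | H S ih =>
    obtain rfl | hS := S.eq_empty_or_nonempty
    · simp
    have halt : ∑ R ∈ S.powerset, (-1 : ℤ) ^ #R • f ∅ = 0 := by
      rw [← sum_smul, sum_powerset_neg_one_pow_card_of_nonempty hS, zero_smul]
    have hproper : ∑ R ∈ S.powerset.erase S, f R =
        ∑ R ∈ S.powerset.erase S, (-1 : ℤ) ^ #R • f ∅ := by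
      refine sum_congr rfl fun R hR => ?_
      have hRS : R ⊂ S := mem_ssubsets.1 hR
      exact ih R hRS fun T hT => hf T (hT.trans hRS.subset)
    have htotal := (hf S subset_rfl hS).trans halt.symm
    rw [← add_sum_erase _ _ (mem_powerset_self S), ← add_sum_erase _ _ (mem_powerset_self S),
      hproper] at htotal
    exact add_right_cancel htotal

/-- The number of vertices of the face `[A,B]` whose outmap value, restricted to the carrier
`B \ A`, is `S`. It serves to count sinks: for `S = ∅` these vertices are the sinks of `[A,B]`. -/
def outmapCount (φ : Finset ℕ → Finset ℕ) (A B S : Finset ℕ) : ℕ :=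
  #{V ∈ Icc A B | φ V ∩ (B \ A) = S}

section Outmap

variable {φ : Finset ℕ → Finset ℕ} {A B R S V : Finset ℕ}

lemma outmapCount_pos (hV : V ∈ Icc A B) : 0 < outmapCount φ A B (φ V ∩ (B \ A)) :=
  card_pos.2 ⟨V, mem_filter.2 ⟨hV, rfl⟩⟩

lemma outmapCount_empty_eq_one_iff : outmapCount φ A B ∅ = 1 ↔ HasUniqueSink φ A B := by
  simp [outmapCount, HasUniqueSink, IsSink, card_eq_one, singleton_iff_unique_mem, and_assoc]

lemma sum_outmapCount_eq_card_filter_subset (φ : Finset ℕ → Finset ℕ) (A B S : Finset ℕ) :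
    ∑ T ∈ S.powerset, outmapCount φ A B T = #{V ∈ Icc A B | φ V ∩ (B \ A) ⊆ S} := by
  simp only [outmapCount, sum_card_fiberwise_eq_card_filter, mem_powerset]

lemma isSink_union_sdiff_iff (hR : R ⊆ S) :
    IsSink φ (A ∪ R) (B \ (S \ R)) V ↔ V ∈ Icc A B ∧ φ V ∩ (B \ A) ⊆ S ∧ V ∩ S = R := by
  have hmem : A ∪ R ⊆ V ∧ V ⊆ B \ (S \ R) ↔ (A ⊆ V ∧ V ⊆ B) ∧ V ∩ S = R := by
    grind
  have hcarrier : (B \ (S \ R)) \ (A ∪ R) = (B \ A) \ S := by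
    grind
  have hout : φ V ∩ ((B \ A) \ S) = ∅ ↔ φ V ∩ (B \ A) ⊆ S := by
    rw [← inter_sdiff_assoc, sdiff_eq_empty_iff_subset]
  rw [IsSink, ← and_assoc, hmem, hcarrier, hout, mem_Icc, and_assoc, and_comm (a := V ∩ S = R)]

lemma card_filter_outmap_subset (hφ : ∀ R ⊆ S, HasUniqueSink φ (A ∪ R) (B \ (S \ R))) :
    #{V ∈ Icc A B | φ V ∩ (B \ A) ⊆ S} = 2 ^ #S := by
  rw [← card_powerset]
  refine card_nbij (· ∩ S) (fun V _ => mem_powerset.2 inter_subset_right) ?_ ?_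
  · intro V hV W hW hVW
    rw [mem_coe, mem_filter] at hV hW
    have hR : V ∩ S ⊆ S := inter_subset_right
    exact (hφ _ hR).unique ((isSink_union_sdiff_iff hR).2 ⟨hV.1, hV.2, rfl⟩)
      ((isSink_union_sdiff_iff hR).2 ⟨hW.1, hW.2, hVW.symm⟩)
  · intro R hR
    rw [mem_coe, mem_powerset] at hR
    obtain ⟨V, hV⟩ := (hφ R hR).exists
    obtain ⟨hmem, hout, htrace⟩ := (isSink_union_sdiff_iff hR).1 hV
    exact ⟨V, mem_coe.2 (mem_filter.2 ⟨hmem, hout⟩), htrace⟩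

namespace IsPUSO

lemma hasUniqueSink_union_sdiff (hφ : IsPUSO φ A B) (hS : S ⊆ B \ A) (hne : S.Nonempty)
    (hR : R ⊆ S) : HasUniqueSink φ (A ∪ R) (B \ (S \ R)) := by
  obtain ⟨hAB, -, hproper⟩ := hφ
  refine hproper _ _ subset_union_left (by grind) sdiff_subset ?_
  rintro ⟨hA, hB⟩
  obtain ⟨x, hx⟩ := hne
  have hxBA : x ∈ B \ A := hS hx
  have hxR : x ∈ R := by grind
  exact (mem_sdiff.1 hxBA).2 (hA ▸ mem_union_right A hxR)

lemma sum_outmapCount (hφ : IsPUSO φ A B) (hS : S ⊆ B \ A) (hne : S.Nonempty) :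
    ∑ T ∈ S.powerset, outmapCount φ A B T = 2 ^ #S := by
  rw [sum_outmapCount_eq_card_filter_subset]
  exact card_filter_outmap_subset fun _ hR => hφ.hasUniqueSink_union_sdiff hS hne hR

lemma outmapCount_sub_one (hφ : IsPUSO φ A B) (hS : S ⊆ B \ A) :
    (outmapCount φ A B S : ℤ) - 1 = (-1) ^ #S * ((outmapCount φ A B ∅ : ℤ) - 1) := by
  rw [← smul_eq_mul]
  refine eq_neg_one_pow_card_zsmul_of_sum_powerset_eq_zero
    (f := fun T => (outmapCount φ A B T : ℤ) - 1) fun T hT hne => ?_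
  have hsum := hφ.sum_outmapCount (hT.trans hS) hne
  rw [sum_sub_distrib, ← Nat.cast_sum, hsum]
  simp

lemma even_card_outmap_iff (hφ : IsPUSO φ A B) (hV : V ∈ Icc A B) :
    Even #(φ V ∩ (B \ A)) ↔ 1 < outmapCount φ A B ∅ := by
  have hsinks : outmapCount φ A B ∅ ≠ 1 := mt outmapCount_empty_eq_one_iff.1 hφ.2.1
  have hpos := outmapCount_pos (φ := φ) hV
  have hcount := hφ.outmapCount_sub_one (inter_subset_right (s₁ := φ V))
  obtain heven | hodd := Nat.even_or_odd #(φ V ∩ (B \ A))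
  · rw [heven.neg_one_pow] at hcount
    exact iff_of_true heven (by lia)
  · rw [hodd.neg_one_pow] at hcount
    exact iff_of_false (Nat.not_even_iff_odd.2 hodd) (by lia)

end IsPUSO

end Outmap

theorem puso_parity_general {φ : Finset ℕ → Finset ℕ} {A B U V : Finset ℕ} (hφ : IsPUSO φ A B)
    (hU : U ∈ Icc A B) (hV : V ∈ Icc A B) :
    Even #((φ U ∩ (B \ A)) ∆ (φ V ∩ (B \ A))) :=
  even_card_symmDiff_iff.2 ((hφ.even_card_outmap_iff hU).trans (hφ.even_card_outmap_iff hV).symm)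

/-- PUSO parity: in a PUSO of the full face of the standard `n`-cube (`n ≥ 2`),
the outmap values of all vertices have the same parity. -/
theorem puso_parity (n : ℕ) (hn : 2 ≤ n)
    (φ : Finset ℕ → Finset ℕ) (hφ : IsPUSO φ ∅ (Finset.Icc 1 n)) :
    ∀ U V : Finset ℕ, U ⊆ Finset.Icc 1 n → V ⊆ Finset.Icc 1 n →
      Even ((φ U ∩ Finset.Icc 1 n) ∆ (φ V ∩ Finset.Icc 1 n)).card := by
  intro U V hU hV
  simpa using puso_parity_general hφ (mem_Icc.2 ⟨empty_subset U, hU⟩)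
    (mem_Icc.2 ⟨empty_subset V, hV⟩)
end

section
/- Let n ≥ 2 and let ψ be an outmap (mapping subsets of {1,…,n−1} to subsets of {1,…,n−1}) that is a USO of the full face [∅,{1,…,n−1}] of the standard (n−1)-cube. For i ∈ {0,1} define the outmap φ_i on the standard n-cube by: for V ⊆ {1,…,n−1}, φ_i(V) = ψ(V) if |ψ(V)| ≡ i (mod 2) and φ_i(V) = ψ(V) ∪ {n} otherwise; and for V with n ∈ V, φ_i(V) = φ_i({1,…,n} \ V). Then whenever φ is an outmap on the standard n-cube that is a PUSO of the full face [∅,{1,…,n}] and satisfies φ(V) ∩ {1,…,n−1} = ψ(V) for all V ⊆ {1,…,n−1}, φ agrees with φ_0 or with φ_1 on all subsets of {1,…,n} (up to the values on the carrier {1,…,n}). -/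
/-!
Fix a face `[A,B]` with carrier `C = B \ A`, and for `S ⊆ C` let `N(S)` be the number of its
vertices whose outmap, restricted to `C`, is `S`. If `j ∈ C \ S`, then `N(S) + N(S ∪ {j})` counts
the vertices whose outmap restricted to `C \ {j}` is `S`, hence is the sum of the corresponding
numbers of the two facets orthogonal to `j`. When these facets are USOs, both numbers are `1` by
induction on the dimension, so `N(S) - 1 = (-1)^|S| (N(∅) - 1)`.

A USO has `N(∅) = 1`, so its outmap is a bijection onto the subsets of `C`. A PUSO has
`N(∅) ∈ {0, 2}`, so its outmap attains exactly the subsets of one parity, each of them twice. Two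
vertices `V ≠ W` with the same value cannot lie in a common proper face, on which the outmap would
be injective; thus `[V ∩ W, V ∪ W]` is the whole face and `V`, `W` are antipodal. Hence a PUSO takes
equal values at antipodal vertices, and a facet together with the common parity of the values
determines it.
-/

open Finset
open scoped symmDiff

/-- Auxiliary map for extending an outmap `ψ` of the `(n-1)`-cube to the
`n`-cube: keep `ψ V` if `|ψ V|` has parity `i`, otherwise add coordinate `n`. -/
def phiExtAux (n i : ℕ) (ψ : Finset ℕ → Finset ℕ) (V : Finset ℕ) : Finset ℕ :=
  if (ψ V).card % 2 = i % 2 then ψ V else ψ V ∪ {n}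

/-- The two candidate extensions `φ_i` (i = 0, 1) of a USO `ψ` of the facet
`[∅,{1,…,n-1}]` to the standard `n`-cube: on the facet use `phiExtAux`, and for
vertices containing `n` copy the value of the antipodal vertex. -/
def phiExt (n i : ℕ) (ψ : Finset ℕ → Finset ℕ) (V : Finset ℕ) : Finset ℕ :=
  if n ∈ V then phiExtAux n i ψ (Finset.Icc 1 n \ V) else phiExtAux n i ψ V

/-- The vertices of the face `[A,B]` whose outmap value, restricted to the carrier `B \ A`, is
`S`; for `S = ∅` these are the sinks of the face. -/
def outFiber (φ : Finset ℕ → Finset ℕ) (A B S : Finset ℕ) : Finset (Finset ℕ) :=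
  {V ∈ Icc A B | φ V ∩ (B \ A) = S}

section

variable {φ : Finset ℕ → Finset ℕ} {A B A' B' S T V W : Finset ℕ} {j : ℕ}

theorem mem_outFiber : V ∈ outFiber φ A B S ↔ (A ⊆ V ∧ V ⊆ B) ∧ φ V ∩ (B \ A) = S := by
  simp [outFiber]

theorem hasUniqueSink_iff_card_outFiber_empty :
    HasUniqueSink φ A B ↔ #(outFiber φ A B ∅) = 1 := by
  simp only [HasUniqueSink, card_eq_one, singleton_iff_unique_mem, mem_outFiber, IsSink, and_assoc]

theorem disjoint_outFiber (hST : S ≠ T) : Disjoint (outFiber φ A B S) (outFiber φ A B T) :=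
  disjoint_left.mpr fun _ hS hT => hST ((mem_outFiber.mp hS).2.symm.trans (mem_outFiber.mp hT).2)

theorem disjoint_outFiber_facets :
    Disjoint (outFiber φ (insert j A) B S) (outFiber φ A (B.erase j) T) :=
  disjoint_left.mpr fun _ hupper hlower => notMem_erase j B <|
    (mem_outFiber.mp hlower).1.2 ((mem_outFiber.mp hupper).1.1 (mem_insert_self j A))

theorem outFiber_union_outFiber_insert (hjS : j ∉ S) :
    outFiber φ A B S ∪ outFiber φ A B (insert j S) =
      outFiber φ (insert j A) B S ∪ outFiber φ A (B.erase j) S := by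
  have hvalue (V : Finset ℕ) : (φ V ∩ (B \ A) = S ∨ φ V ∩ (B \ A) = insert j S) ↔
      φ V ∩ (B \ A).erase j = S := by
    rw [inter_erase]; grind
  have hface (V : Finset ℕ) : (A ⊆ V ∧ V ⊆ B) ↔
      (insert j A ⊆ V ∧ V ⊆ B) ∨ (A ⊆ V ∧ V ⊆ B.erase j) := by
    grind
  ext V
  simp only [mem_union, mem_outFiber, sdiff_insert, erase_sdiff_comm, ← and_or_left,
    ← or_and_right, hvalue, ← hface]

theorem card_outFiber_add_card_outFiber_insert (hjS : j ∉ S) :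
    #(outFiber φ A B S) + #(outFiber φ A B (insert j S)) =
      #(outFiber φ (insert j A) B S) + #(outFiber φ A (B.erase j) S) := by
  rw [← card_union_of_disjoint (disjoint_outFiber (ne_insert_of_notMem _ _ hjS)),
    ← card_union_of_disjoint disjoint_outFiber_facets, outFiber_union_outFiber_insert hjS]

theorem card_outFiber_sub_one_of_facets
    (hfacets : ∀ j ∈ B \ A, ∀ S ⊆ (B \ A).erase j,
      #(outFiber φ (insert j A) B S) = 1 ∧ #(outFiber φ A (B.erase j) S) = 1)
    (hS : S ⊆ B \ A) :
    (#(outFiber φ A B S) : ℤ) - 1 = (-1) ^ #S * (#(outFiber φ A B ∅) - 1) := by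
  induction S using Finset.induction_on with
  | empty => simp
  | insert j S hjS ih =>
    obtain ⟨hj, hS⟩ := insert_subset_iff.mp hS
    obtain ⟨hupper, hlower⟩ := hfacets j hj S (subset_erase.mpr ⟨hS, hjS⟩)
    have hsplit := card_outFiber_add_card_outFiber_insert (φ := φ) (A := A) (B := B) hjS
    rw [card_insert_of_notMem hjS, pow_succ, mul_neg_one, neg_mul, ← ih hS]
    omega

theorem IsUSO.mono (h : IsUSO φ A B) (hA : A ⊆ A') (hAB : A' ⊆ B') (hB : B' ⊆ B) :
    IsUSO φ A' B' :=
  ⟨hAB, fun _ _ hA' hAB' hB' => h.2 _ _ (hA.trans hA') hAB' (hB'.trans hB)⟩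

theorem IsUSO.card_outFiber (h : IsUSO φ A B) (hS : S ⊆ B \ A) : #(outFiber φ A B S) = 1 := by
  induction hd : #(B \ A) using Nat.strong_induction_on generalizing A B S with
  | _ d ih =>
    have hfacets : ∀ j ∈ B \ A, ∀ T ⊆ (B \ A).erase j,
        #(outFiber φ (insert j A) B T) = 1 ∧ #(outFiber φ A (B.erase j) T) = 1 := by
      intro j hj T hT
      have hlt : #((B \ A).erase j) < d := hd ▸ card_erase_lt_of_mem hj
      obtain ⟨hjB, hjA⟩ := mem_sdiff.mp hj
      have hupper : IsUSO φ (insert j A) B :=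
        h.mono (subset_insert j A) (insert_subset hjB h.1) subset_rfl
      have hlower : IsUSO φ A (B.erase j) :=
        h.mono subset_rfl (subset_erase.mpr ⟨h.1, hjA⟩) (erase_subset j B)
      exact ⟨ih _ (by rwa [sdiff_insert]) hupper (by rwa [sdiff_insert]) rfl,
        ih _ (by rwa [erase_sdiff_comm]) hlower (by rwa [erase_sdiff_comm]) rfl⟩
    have hsink := hasUniqueSink_iff_card_outFiber_empty.mp (h.2 A B subset_rfl h.1 subset_rfl)
    have hcard := card_outFiber_sub_one_of_facets hfacets hS
    rw [hsink, Nat.cast_one, sub_self, mul_zero] at hcard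
    omega

theorem IsUSO.eq_of_inter_sdiff_eq (h : IsUSO φ A B) (hV : A ⊆ V ∧ V ⊆ B) (hW : A ⊆ W ∧ W ⊆ B)
    (hVW : φ V ∩ (B \ A) = φ W ∩ (B \ A)) : V = W :=
  card_le_one.mp (h.card_outFiber inter_subset_right).le _ (mem_outFiber.mpr ⟨hV, hVW⟩)
    _ (mem_outFiber.mpr ⟨hW, rfl⟩)

namespace IsPUSO

theorem isUSO_of_ne (h : IsPUSO φ A B) (hA : A ⊆ A') (hAB : A' ⊆ B') (hB : B' ⊆ B)
    (hne : ¬(A' = A ∧ B' = B)) : IsUSO φ A' B' := by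
  refine ⟨hAB, fun A'' B'' hA' hAB' hB' => h.2.2 _ _ (hA.trans hA') hAB' (hB'.trans hB) ?_⟩
  rintro ⟨rfl, rfl⟩
  exact hne ⟨hA'.antisymm hA, hB.antisymm hB'⟩

theorem isUSO_insert (h : IsPUSO φ A B) (hj : j ∈ B \ A) : IsUSO φ (insert j A) B := by
  obtain ⟨hjB, hjA⟩ := mem_sdiff.mp hj
  exact h.isUSO_of_ne (subset_insert j A) (insert_subset hjB h.1) subset_rfl
    fun hface => hjA (insert_eq_self.mp hface.1)

theorem isUSO_erase (h : IsPUSO φ A B) (hj : j ∈ B \ A) : IsUSO φ A (B.erase j) := by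
  obtain ⟨hjB, hjA⟩ := mem_sdiff.mp hj
  exact h.isUSO_of_ne subset_rfl (subset_erase.mpr ⟨h.1, hjA⟩) (erase_subset j B)
    fun hface => erase_eq_self.mp hface.2 hjB

theorem card_outFiber_sub_one (h : IsPUSO φ A B) (hS : S ⊆ B \ A) :
    (#(outFiber φ A B S) : ℤ) - 1 = (-1) ^ #S * (#(outFiber φ A B ∅) - 1) := by
  refine card_outFiber_sub_one_of_facets (fun j hj T hT => ⟨?_, ?_⟩) hS
  · exact (h.isUSO_insert hj).card_outFiber (by rwa [sdiff_insert])
  · exact (h.isUSO_erase hj).card_outFiber (by rwa [erase_sdiff_comm])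

theorem carrier_nonempty (h : IsPUSO φ A B) : (B \ A).Nonempty := by
  rw [sdiff_nonempty]
  intro hBA
  obtain rfl : A = B := h.1.antisymm hBA
  exact h.2.1 ⟨A, by simp [IsSink], fun V hV => hV.2.1.antisymm hV.1⟩

theorem card_outFiber_empty (h : IsPUSO φ A B) :
    #(outFiber φ A B ∅) = 0 ∨ #(outFiber φ A B ∅) = 2 := by
  obtain ⟨j, hj⟩ := h.carrier_nonempty
  have hne : #(outFiber φ A B ∅) ≠ 1 := hasUniqueSink_iff_card_outFiber_empty.not.mp h.2.1
  have hsingleton := h.card_outFiber_sub_one (singleton_subset_iff.mpr hj)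
  rw [card_singleton, pow_one, neg_one_mul] at hsingleton
  omega

theorem card_outFiber (h : IsPUSO φ A B) (hS : S ⊆ B \ A) :
    #(outFiber φ A B S) = if Even #S ↔ #(outFiber φ A B ∅) = 2 then 2 else 0 := by
  have hcard := h.card_outFiber_sub_one hS
  have hempty := h.card_outFiber_empty
  rcases Nat.even_or_odd #S with hparity | hparity
  · rw [hparity.neg_one_pow] at hcard
    simp only [hparity, true_iff]
    split_ifs <;> omega
  · rw [hparity.neg_one_pow] at hcard
    simp only [Nat.not_even_iff_odd.mpr hparity, false_iff]
    split_ifs <;> omega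

theorem even_card_inter_iff (h : IsPUSO φ A B) (hV : A ⊆ V ∧ V ⊆ B) :
    Even #(φ V ∩ (B \ A)) ↔ #(outFiber φ A B ∅) = 2 := by
  by_contra hparity
  have hcard := h.card_outFiber (S := φ V ∩ (B \ A)) inter_subset_right
  rw [if_neg hparity] at hcard
  exact card_ne_zero_of_mem (mem_outFiber.mpr ⟨hV, rfl⟩) hcard

theorem card_inter_modEq (h : IsPUSO φ A B) (hV : A ⊆ V ∧ V ⊆ B) (hW : A ⊆ W ∧ W ⊆ B) :
    #(φ V ∩ (B \ A)) ≡ #(φ W ∩ (B \ A)) [MOD 2] := by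
  have heven := (h.even_card_inter_iff hV).trans (h.even_card_inter_iff hW).symm
  rw [Nat.even_iff, Nat.even_iff] at heven
  rw [Nat.ModEq]
  omega

theorem card_outFiber_inter (h : IsPUSO φ A B) (hV : A ⊆ V ∧ V ⊆ B) :
    #(outFiber φ A B (φ V ∩ (B \ A))) = 2 := by
  rw [h.card_outFiber inter_subset_right, if_pos (h.even_card_inter_iff hV)]

theorem inter_eq_and_union_eq (h : IsPUSO φ A B) (hV : A ⊆ V ∧ V ⊆ B) (hW : A ⊆ W ∧ W ⊆ B)
    (hne : V ≠ W) (hVW : φ V ∩ (B \ A) = φ W ∩ (B \ A)) : V ∩ W = A ∧ V ∪ W = B := by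
  by_contra hface
  have hUSO : IsUSO φ (V ∩ W) (V ∪ W) := h.isUSO_of_ne (subset_inter hV.1 hW.1)
    (inter_subset_left.trans subset_union_left) (union_subset hV.2 hW.2) hface
  have hcarrier : (V ∪ W) \ (V ∩ W) ⊆ B \ A :=
    sdiff_subset_sdiff (union_subset hV.2 hW.2) (subset_inter hV.1 hW.1)
  refine hne (hUSO.eq_of_inter_sdiff_eq ⟨inter_subset_left, subset_union_left⟩
    ⟨inter_subset_right, subset_union_right⟩ ?_)
  rw [← inter_eq_right.mpr hcarrier, ← inter_assoc, hVW, inter_assoc]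

theorem inter_sdiff_eq_of_antipodal (h : IsPUSO φ A B) (hinter : V ∩ W = A) (hunion : V ∪ W = B) :
    φ V ∩ (B \ A) = φ W ∩ (B \ A) := by
  have hV : A ⊆ V ∧ V ⊆ B := ⟨hinter ▸ inter_subset_left, hunion ▸ subset_union_left⟩
  obtain ⟨U, hU, hUV⟩ := exists_mem_ne (one_lt_two.trans_eq (h.card_outFiber_inter hV).symm) V
  obtain ⟨hU, hφ⟩ := mem_outFiber.mp hU
  obtain ⟨hinter', hunion'⟩ := h.inter_eq_and_union_eq hU hV hUV hφ
  obtain rfl : U = W := eq_of_inf_eq_sup_eq (a := V)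
    (hinter'.trans (inter_comm V W ▸ hinter).symm) (hunion'.trans (union_comm V W ▸ hunion).symm)
  exact hφ.symm

end IsPUSO

variable {n i : ℕ} {ψ : Finset ℕ → Finset ℕ}

theorem phiExtAux_eq_of_erase_eq (hS : S.erase n = ψ V) (hcard : #S % 2 = i % 2) :
    phiExtAux n i ψ V = S := by
  rw [phiExtAux, ← hS]
  by_cases hn : n ∈ S
  · have := card_erase_add_one hn
    rw [if_neg (by omega), union_singleton, insert_erase hn]
  · rw [erase_eq_of_notMem hn, if_pos hcard]

theorem IsPUSO.phiExtAux_eq_inter (h : IsPUSO φ ∅ (Icc 1 n))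
    (hψ : ∀ V ⊆ Icc 1 (n - 1), φ V ∩ Icc 1 (n - 1) = ψ V)
    (hi : #(φ ∅ ∩ Icc 1 n) % 2 = i % 2) (hV : V ⊆ Icc 1 n) (hn : n ∉ V) :
    phiExtAux n i ψ V = φ V ∩ Icc 1 n := by
  have herase : (Icc 1 n).erase n = Icc 1 (n - 1) := by
    grind
  have hparity := h.card_inter_modEq ⟨empty_subset V, hV⟩ ⟨subset_rfl, empty_subset (Icc 1 n)⟩
  rw [sdiff_empty] at hparity
  refine phiExtAux_eq_of_erase_eq ?_ (hparity.trans hi)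
  rw [← inter_erase, herase, hψ V (herase ▸ subset_erase.mpr ⟨hV, hn⟩)]

theorem IsPUSO.phiExt_eq_inter (h : IsPUSO φ ∅ (Icc 1 n))
    (hψ : ∀ V ⊆ Icc 1 (n - 1), φ V ∩ Icc 1 (n - 1) = ψ V)
    (hi : #(φ ∅ ∩ Icc 1 n) % 2 = i % 2) (hV : V ⊆ Icc 1 n) :
    phiExt n i ψ V = φ V ∩ Icc 1 n := by
  by_cases hn : n ∈ V
  · have hantipodal :=
      h.inter_sdiff_eq_of_antipodal (sdiff_inter_self V (Icc 1 n)) (sdiff_union_of_subset hV)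
    rw [sdiff_empty] at hantipodal
    rw [phiExt, if_pos hn, ← hantipodal]
    exact h.phiExtAux_eq_inter hψ hi sdiff_subset fun hmem => (mem_sdiff.mp hmem).2 hn
  · rw [phiExt, if_neg hn, h.phiExtAux_eq_inter hψ hi hV hn]

end

/-- Any PUSO of the full face of the standard `n`-cube extending a USO `ψ` of
the facet `[∅,{1,…,n-1}]` agrees (within the carrier `{1,…,n}`) with one of the
two canonical candidates `φ_0`, `φ_1`. -/
theorem puso_extension_candidates (n : ℕ) (hn : 2 ≤ n)
    (ψ : Finset ℕ → Finset ℕ)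
    (hψr : ∀ V : Finset ℕ, V ⊆ Finset.Icc 1 (n - 1) → ψ V ⊆ Finset.Icc 1 (n - 1))
    (hψ : IsUSO ψ ∅ (Finset.Icc 1 (n - 1)))
    (φ : Finset ℕ → Finset ℕ)
    (hφ : IsPUSO φ ∅ (Finset.Icc 1 n))
    (hagree : ∀ V : Finset ℕ, V ⊆ Finset.Icc 1 (n - 1) →
      φ V ∩ Finset.Icc 1 (n - 1) = ψ V) :
    (∀ V : Finset ℕ, V ⊆ Finset.Icc 1 n →
        φ V ∩ Finset.Icc 1 n = phiExt n 0 ψ V ∩ Finset.Icc 1 n) ∨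
    (∀ V : Finset ℕ, V ⊆ Finset.Icc 1 n →
        φ V ∩ Finset.Icc 1 n = phiExt n 1 ψ V ∩ Finset.Icc 1 n) := by
  have hcandidate {i : ℕ} (hi : #(φ ∅ ∩ Icc 1 n) % 2 = i % 2) {V : Finset ℕ} (hV : V ⊆ Icc 1 n) :
      φ V ∩ Icc 1 n = phiExt n i ψ V ∩ Icc 1 n := by
    rw [hφ.phiExt_eq_inter hagree hi hV, inter_assoc, inter_self]
  exact (Nat.mod_two_eq_zero_or_one #(φ ∅ ∩ Icc 1 n)).imp
    (fun heven _ hV => hcandidate heven hV) (fun hodd _ hV => hcandidate hodd hV)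
end
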